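/- arXiv:2205.02342 — 2 statements merged into one kernel-verified Lean document; each statement's English description precedes it below -/
import Mathlib

section
/- Let 0 < s ≤ 1, s ≤ r ≤ 1, and let Φ : M_m(ℂ) → M_n(ℂ) be a sesquiunital Schwarz map (unital with Φ†(I) = (n/m) I). Then for all positive semidefinite A ∈ M_n(ℂ) and all B ∈ M_m(ℂ): tr[(Φ(B)* A^s Φ(B))^{r/s}] ≤ (n/m)^{1-r} tr[(B* Φ†(A)^s B)^{r/s}]. -/
open Matrix
open scoped ComplexOrder

/-- Real power of a matrix, defined spectrally for Hermitian matrices (junk value `0` otherwise). -/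
noncomputable def mpow {k : ℕ} (A : Matrix (Fin k) (Fin k) ℂ) (p : ℝ) : Matrix (Fin k) (Fin k) ℂ :=
  if hA : A.IsHermitian then
    (hA.eigenvectorUnitary : Matrix (Fin k) (Fin k) ℂ) *
      Matrix.diagonal (fun i => ((hA.eigenvalues i ^ p : ℝ) : ℂ)) *
      (hA.eigenvectorUnitary : Matrix (Fin k) (Fin k) ℂ)ᴴ
  else 0

/-- A Schwarz map: `Φ(K*K) ≥ Φ(K)*Φ(K)` for all `K`. -/
def IsSchwarz {a b : ℕ} (Φ : Matrix (Fin a) (Fin a) ℂ →ₗ[ℂ] Matrix (Fin b) (Fin b) ℂ) : Prop :=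
  ∀ K, (Φ (Kᴴ * K) - (Φ K)ᴴ * Φ K).PosSemidef

/-- A positive map: sends positive semidefinite matrices to positive semidefinite matrices. -/
def IsPositiveMap {a b : ℕ} (Φ : Matrix (Fin a) (Fin a) ℂ →ₗ[ℂ] Matrix (Fin b) (Fin b) ℂ) : Prop :=
  ∀ X, X.PosSemidef → (Φ X).PosSemidef

/-- `Ψ` is the Hilbert–Schmidt adjoint of `Φ`: `⟨X, Φ Y⟩ = ⟨Ψ X, Y⟩`. -/
def IsHSAdjoint {a b : ℕ} (Φ : Matrix (Fin a) (Fin a) ℂ →ₗ[ℂ] Matrix (Fin b) (Fin b) ℂ)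
    (Ψ : Matrix (Fin b) (Fin b) ℂ →ₗ[ℂ] Matrix (Fin a) (Fin a) ℂ) : Prop :=
  ∀ X Y, (Xᴴ * Φ Y).trace = ((Ψ X)ᴴ * Y).trace

/-!
Put `X = Φ(B)* A^s Φ(B)`, `Y = B* Ψ(A)^s B` and `p = r / s`. Lieb's functional satisfies
`tr Φ(B)* A^s Φ(B) Z^(1-s) ≤ tr B* Ψ(A)^s B Ψ(Z)^(1-s)` for every `Z ≥ 0`. Indeed `a^s z^(1-s)` is a
positive superposition of parallel sums `(t a⁻¹ + z⁻¹)⁻¹`, and the parallel sum of the operators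
`L_A`, `R_Z` of left and right multiplication is the infimum over `K` of
`tr K* A K + tr (B - K)* (B - K) Z`, in which both terms are controlled by the Schwarz inequality
and duality. With `Z = X^((p-1)/(1-s))` the left side is `T = tr X^p`; on the right, trace Hölder
and Jensen's inequality for the positive map `Ψ` produce a power of `tr Y^p` times a power of `T`
with exponent less than one, and dividing the latter out gives the bound.
-/

section Spectral

variable {ι : Type*} [Fintype ι] [DecidableEq ι]

/-- The matrix `U diag(a) U*` with eigenbasis `U` and real eigenvalues `a`, as an algebra
homomorphism in `a`, so that functional calculus in a fixed eigenbasis becomes pointwise. -/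
noncomputable def unitaryDiag (U : unitaryGroup ι ℂ) : (ι → ℝ) →ₐ[ℝ] Matrix ι ι ℂ :=
  ((Unitary.conjStarAlgAut ℂ (Matrix ι ι ℂ) U).toAlgEquiv.toAlgHom.restrictScalars ℝ).comp
    ((diagonalAlgHom ℝ).comp (Complex.ofRealAm.compLeft ι))

theorem unitaryDiag_apply (U : unitaryGroup ι ℂ) (a : ι → ℝ) :
    unitaryDiag U a = U * diagonal (fun i => (a i : ℂ)) * (U : Matrix ι ι ℂ)ᴴ := rfl

theorem conjTranspose_mul_unitaryDiag_mul (U : unitaryGroup ι ℂ) (a : ι → ℝ) :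
    (U : Matrix ι ι ℂ)ᴴ * unitaryDiag U a * U = diagonal fun i => (a i : ℂ) := by
  rw [unitaryDiag_apply, ← star_eq_conjTranspose, mul_assoc, mul_assoc, Unitary.coe_star_mul_self,
    mul_one, ← mul_assoc, Unitary.coe_star_mul_self, one_mul]

theorem posSemidef_unitaryDiag_iff {U : unitaryGroup ι ℂ} {a : ι → ℝ} :
    (unitaryDiag U a).PosSemidef ↔ 0 ≤ a := by
  refine ⟨fun h => ?_, fun h => ?_⟩
  · have hd := h.conjTranspose_mul_mul_same (U : Matrix ι ι ℂ)
    rw [conjTranspose_mul_unitaryDiag_mul, posSemidef_diagonal_iff] at hd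
    exact fun i => by exact_mod_cast hd i
  · rw [unitaryDiag_apply]
    exact (posSemidef_diagonal_iff.mpr fun i => by exact_mod_cast h i).mul_mul_conjTranspose_same _

theorem re_trace_unitaryDiag (U : unitaryGroup ι ℂ) (a : ι → ℝ) :
    (unitaryDiag U a).trace.re = ∑ i, a i := by
  rw [unitaryDiag_apply, trace_mul_comm, ← mul_assoc, ← star_eq_conjTranspose,
    Unitary.coe_star_mul_self, one_mul, trace_diagonal, Complex.re_sum]
  rfl

theorem re_trace_mul_unitaryDiag (A : Matrix ι ι ℂ) (U : unitaryGroup ι ℂ) (a : ι → ℝ) :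
    (A * unitaryDiag U a).trace.re = ∑ i, (((U : Matrix ι ι ℂ)ᴴ * A * U) i i).re * a i := by
  rw [unitaryDiag_apply, ← mul_assoc, trace_mul_comm, ← mul_assoc, ← mul_assoc, trace,
    Complex.re_sum]
  refine Finset.sum_congr rfl fun i _ => ?_
  rw [diag_apply, mul_diagonal, Complex.re_mul_ofReal]

end Spectral

section Power

variable {k : ℕ} {A : Matrix (Fin k) (Fin k) ℂ}

theorem mpow_eq_cfc (hA : A.PosSemidef) (p : ℝ) : mpow A p = cfc (fun x : ℝ => x ^ p) A := by
  rw [mpow, dif_pos hA.1, hA.1.cfc_eq]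
  rfl

theorem exists_eq_unitaryDiag (hA : A.PosSemidef) :
    ∃ (U : unitaryGroup (Fin k) ℂ) (a : Fin k → ℝ), 0 ≤ a ∧ A = unitaryDiag U a ∧
      ∀ p, mpow A p = unitaryDiag U fun i => a i ^ p :=
  ⟨_, _, hA.eigenvalues_nonneg, hA.1.spectral_theorem, fun p => by rw [mpow, dif_pos hA.1]; rfl⟩

theorem posSemidef_mpow (hA : A.PosSemidef) (p : ℝ) : (mpow A p).PosSemidef := by
  obtain ⟨U, a, ha, -, hp⟩ := exists_eq_unitaryDiag hA
  rw [hp]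
  exact posSemidef_unitaryDiag_iff.mpr fun i => Real.rpow_nonneg (ha i) p

theorem re_trace_mpow_nonneg (hA : A.PosSemidef) (p : ℝ) : 0 ≤ (mpow A p).trace.re :=
  (Complex.nonneg_iff.mp (posSemidef_mpow hA p).trace_nonneg).1

theorem mpow_zero (hA : A.PosSemidef) : mpow A 0 = 1 := by
  obtain ⟨U, a, -, -, hp⟩ := exists_eq_unitaryDiag hA
  simp only [hp, Real.rpow_zero]
  exact map_one (unitaryDiag U)

theorem mpow_one (hA : A.PosSemidef) : mpow A 1 = A := by
  obtain ⟨U, a, -, h, hp⟩ := exists_eq_unitaryDiag hA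
  simpa only [hp, Real.rpow_one] using h.symm

theorem mul_mpow (hA : A.PosSemidef) {p : ℝ} (hp : 1 + p ≠ 0) :
    A * mpow A p = mpow A (1 + p) := by
  obtain ⟨U, a, ha, h, hpow⟩ := exists_eq_unitaryDiag hA
  rw [hpow, hpow, h, ← map_mul]
  congr 1 with i
  rw [Pi.mul_apply, Real.rpow_add' (ha i) hp, Real.rpow_one]

theorem mpow_mpow (hA : A.PosSemidef) (p q : ℝ) : mpow (mpow A p) q = mpow A (p * q) := by
  have hcont (f : ℝ → ℝ) {S : Set ℝ} (hS : S.Finite) : ContinuousOn f S := hS.continuousOn f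
  have hspec := A.finite_real_spectrum
  rw [mpow_eq_cfc (posSemidef_mpow hA p), mpow_eq_cfc hA, mpow_eq_cfc hA,
    ← cfc_comp' (· ^ q) (· ^ p) A (hcont _ (hspec.image _)) (hcont _ hspec) hA.1.isSelfAdjoint]
  refine cfc_congr fun x hx => ?_
  rw [hA.1.spectrum_real_eq_range_eigenvalues] at hx
  obtain ⟨i, rfl⟩ := hx
  exact (Real.rpow_mul (hA.eigenvalues_nonneg i) p q).symm

theorem one_mpow (p : ℝ) : mpow (1 : Matrix (Fin k) (Fin k) ℂ) p = 1 := by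
  simpa only [mpow_zero .one, zero_mul] using mpow_mpow .one 0 p

end Power

section Trace

variable {ι : Type*} [Fintype ι] {A B C : Matrix ι ι ℂ}

open scoped MatrixOrder in
theorem trace_mul_nonneg (hA : A.PosSemidef) (hB : B.PosSemidef) : 0 ≤ (A * B).trace := by
  classical
  obtain ⟨K, rfl⟩ := CStarAlgebra.nonneg_iff_eq_star_mul_self.mp hA.nonneg
  rw [mul_assoc, trace_mul_comm]
  exact (hB.mul_mul_conjTranspose_same K).trace_nonneg

theorem re_trace_mul_le_of_posSemidef_sub (hA : A.PosSemidef) (hBC : (C - B).PosSemidef) :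
    (A * B).trace.re ≤ (A * C).trace.re := by
  have h := (Complex.nonneg_iff.mp (trace_mul_nonneg hA hBC)).1
  rwa [mul_sub, trace_sub, Complex.sub_re, sub_nonneg] at h

end Trace

section Maps

variable {m n : ℕ} {Φ : Matrix (Fin m) (Fin m) ℂ →ₗ[ℂ] Matrix (Fin n) (Fin n) ℂ}
  {Ψ : Matrix (Fin n) (Fin n) ℂ →ₗ[ℂ] Matrix (Fin m) (Fin m) ℂ}

open scoped MatrixOrder in
theorem IsSchwarz.isPositiveMap (hΦ : IsSchwarz Φ) : IsPositiveMap Φ := by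
  intro X hX
  obtain ⟨K, rfl⟩ := CStarAlgebra.nonneg_iff_eq_star_mul_self.mp hX.nonneg
  simpa only [star_eq_conjTranspose, sub_add_cancel] using
    (hΦ K).add (posSemidef_conjTranspose_mul_self (Φ K))

open scoped MatrixOrder in
theorem IsPositiveMap.map_conjTranspose (hΦ : IsPositiveMap Φ) (K : Matrix (Fin m) (Fin m) ℂ) :
    Φ Kᴴ = (Φ K)ᴴ :=
  map_star (PositiveLinearMap.mk₀ Φ fun X hX => (hΦ X hX.posSemidef).nonneg) K

theorem IsHSAdjoint.isPositiveMap (hadj : IsHSAdjoint Φ Ψ) (hΦ : IsPositiveMap Φ) :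
    IsPositiveMap Ψ := by
  intro X hX
  have hquad (x : EuclideanSpace ℂ (Fin m)) :
      0 ≤ inner ℂ (toEuclideanLin (Ψ X) x) x := by
    have hinner : inner ℂ (toEuclideanLin (Ψ X) x) x =
        ((Ψ X)ᴴ * vecMulVec x.ofLp (star x.ofLp)).trace := by
      rw [mul_vecMulVec, trace_vecMulVec, EuclideanSpace.inner_eq_star_dotProduct,
        dotProduct_comm ((Ψ X)ᴴ *ᵥ _), dotProduct_mulVec, ← star_mulVec, dotProduct_comm]
      rfl
    rw [hinner, ← hadj X, hX.1.eq]
    exact trace_mul_nonneg hX (hΦ _ (posSemidef_vecMulVec_self_star _))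
  rw [← isPositive_toEuclideanLin_iff, LinearMap.isPositive_iff_complex]
  intro x
  obtain ⟨hre, him⟩ := Complex.nonneg_iff.mp (hquad x)
  exact ⟨Complex.ext rfl him, hre⟩

theorem IsHSAdjoint.trace_map_mul (hadj : IsHSAdjoint Φ Ψ) (hΦ : IsPositiveMap Φ)
    {A : Matrix (Fin n) (Fin n) ℂ} (hA : A.PosSemidef) (X : Matrix (Fin m) (Fin m) ℂ) :
    (Ψ A * X).trace = (A * Φ X).trace := by
  simpa only [hA.1.eq, (hadj.isPositiveMap hΦ A hA).1.eq] using (hadj A X).symm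

theorem IsSchwarz.re_trace_conjTranspose_mul_self_mul_le (hΦ : IsSchwarz Φ)
    (hadj : IsHSAdjoint Φ Ψ) {A : Matrix (Fin n) (Fin n) ℂ} (hA : A.PosSemidef)
    (K : Matrix (Fin m) (Fin m) ℂ) :
    ((Φ K)ᴴ * Φ K * A).trace.re ≤ (Kᴴ * K * Ψ A).trace.re := by
  rw [trace_mul_comm, trace_mul_comm (Kᴴ * K), hadj.trace_map_mul hΦ.isPositiveMap hA]
  exact re_trace_mul_le_of_posSemidef_sub hA (hΦ K)

theorem IsSchwarz.re_trace_conjTranspose_mul_mul_le (hΦ : IsSchwarz Φ)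
    (hadj : IsHSAdjoint Φ Ψ) {A : Matrix (Fin n) (Fin n) ℂ} (hA : A.PosSemidef)
    (K : Matrix (Fin m) (Fin m) ℂ) :
    ((Φ K)ᴴ * A * Φ K).trace.re ≤ (Kᴴ * Ψ A * K).trace.re := by
  have h := hΦ.re_trace_conjTranspose_mul_self_mul_le hadj hA Kᴴ
  simp only [hΦ.isPositiveMap.map_conjTranspose, conjTranspose_conjTranspose] at h
  rwa [trace_mul_cycle, trace_mul_cycle Kᴴ]

theorem IsSchwarz.posSemidef_one_sub_map_one (hΦ : IsSchwarz Φ) : (1 - Φ 1).PosSemidef := by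
  have hΦ1 : (Φ 1).IsHermitian := (hΦ.isPositiveMap 1 .one).1
  have hsq : (Φ 1 - Φ 1 * Φ 1).PosSemidef := by
    simpa only [conjTranspose_one, mul_one, hΦ1.eq] using hΦ 1
  have h := hsq.add (posSemidef_conjTranspose_mul_self (1 - Φ 1))
  have hsum : 1 - Φ 1 = Φ 1 - Φ 1 * Φ 1 + (1 - Φ 1)ᴴ * (1 - Φ 1) := by
    rw [conjTranspose_sub, conjTranspose_one, hΦ1.eq]
    noncomm_ring
  rwa [hsum]

theorem IsSchwarz.re_trace_map_le (hΦ : IsSchwarz Φ) (hadj : IsHSAdjoint Φ Ψ)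
    {X : Matrix (Fin n) (Fin n) ℂ} (hX : X.PosSemidef) : (Ψ X).trace.re ≤ X.trace.re := by
  have h := re_trace_mul_le_of_posSemidef_sub hX hΦ.posSemidef_one_sub_map_one
  rwa [← hadj.trace_map_mul hΦ.isPositiveMap hX, mul_one, mul_one] at h

end Maps

section ParallelSum

/-- The parallel sum `(a⁻¹ + z⁻¹)⁻¹`, written so that it is `0` as soon as one argument is, the
right value for the variational formulas below. -/
noncomputable def parallelSum (a z : ℝ) : ℝ := a * z / (a + z)

theorem parallelSum_mul_normSq_le {a z : ℝ} (ha : 0 ≤ a) (hz : 0 ≤ z) (x y : ℂ) :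
    parallelSum a z * Complex.normSq x ≤ a * Complex.normSq y + z * Complex.normSq (x - y) := by
  rcases (add_nonneg ha hz).eq_or_lt with h | h
  · simpa only [parallelSum, ← h, div_zero, zero_mul] using
      add_nonneg (mul_nonneg ha (Complex.normSq_nonneg y))
        (mul_nonneg hz (Complex.normSq_nonneg (x - y)))
  · have hgap : a * Complex.normSq y + z * Complex.normSq (x - y) -
        parallelSum a z * Complex.normSq x =
        Complex.normSq (((a + z : ℝ) : ℂ) * y - (z : ℂ) * x) / (a + z) := by
      simp only [parallelSum, Complex.normSq_apply, Complex.sub_re, Complex.sub_im,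
        Complex.re_ofReal_mul, Complex.im_ofReal_mul]
      field_simp
      ring
    exact sub_nonneg.mp (hgap ▸ div_nonneg (Complex.normSq_nonneg _) h.le)

theorem parallelSum_mul_normSq_eq {a z : ℝ} (ha : 0 ≤ a) (hz : 0 ≤ z) (x : ℂ) :
    a * Complex.normSq (((z / (a + z) : ℝ) : ℂ) * x) +
      z * Complex.normSq (x - ((z / (a + z) : ℝ) : ℂ) * x) =
    parallelSum a z * Complex.normSq x := by
  rcases hz.eq_or_lt with rfl | hz
  · simp [parallelSum]
  · simp only [parallelSum, Complex.normSq_apply, Complex.sub_re, Complex.sub_im,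
      Complex.re_ofReal_mul, Complex.im_ofReal_mul]
    field_simp
    ring

open MeasureTheory in
theorem exists_measure_rpow_mul_rpow_eq_integral_parallelSum {s : ℝ} (hs : s ∈ Set.Ioo 0 1) :
    ∃ μ : Measure ℝ, ∀ a z : ℝ, 0 ≤ a → 0 ≤ z →
      IntegrableOn (fun t => t ^ (s - 1) * parallelSum (t⁻¹ * a) z) (Set.Ioi 0) μ ∧
      a ^ s * z ^ (1 - s) = ∫ t in Set.Ioi 0, t ^ (s - 1) * parallelSum (t⁻¹ * a) z ∂μ := by
  obtain ⟨μ, hμ⟩ := Real.exists_measure_rpow_eq_integral_rpowIntegrand₀₁ hs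
  refine ⟨μ, fun a z ha hz => ?_⟩
  rcases hz.eq_or_lt with rfl | hz
  · simp [parallelSum, Real.zero_rpow (sub_pos.mpr hs.2).ne']
  obtain ⟨hint, heq⟩ := hμ (a / z) (div_nonneg ha hz.le)
  have hkernel : Set.EqOn (fun t => z * Real.rpowIntegrand₀₁ s t (a / z))
      (fun t => t ^ (s - 1) * parallelSum (t⁻¹ * a) z) (Set.Ioi 0) := by
    intro t ht
    have ht : 0 < t := ht
    have : 0 < a + t * z := by positivity
    simp only [parallelSum]
    rw [Real.rpowIntegrand₀₁_eq_pow_div hs ht.le (div_nonneg ha hz.le)]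
    field_simp
    ring
  refine ⟨(integrableOn_congr_fun hkernel measurableSet_Ioi).mp (hint.const_mul z), ?_⟩
  rw [← setIntegral_congr_fun measurableSet_Ioi hkernel, integral_const_mul, ← heq,
    Real.div_rpow ha hz.le, Real.rpow_sub hz, Real.rpow_one]
  field_simp

end ParallelSum

section SpectralSum

variable {ι : Type*} [Fintype ι] [DecidableEq ι]

/-- The double sum `∑ kᵢⱼ |⟨uᵢ, X vⱼ⟩|²` over the columns of `U` and `V`: the quadratic form in `X`
of the double operator integral with symbol `k`. -/
noncomputable def spectralSum (U V : unitaryGroup ι ℂ) (k : ι → ι → ℝ) (X : Matrix ι ι ℂ) : ℝ :=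
  ∑ i, ∑ j, k i j * Complex.normSq (((U : Matrix ι ι ℂ)ᴴ * X * V) i j)

theorem re_trace_conjTranspose_mul_unitaryDiag_mul_unitaryDiag (U V : unitaryGroup ι ℂ)
    (a z : ι → ℝ) (X : Matrix ι ι ℂ) :
    (Xᴴ * unitaryDiag U a * X * unitaryDiag V z).trace.re =
      spectralSum U V (fun i j => a i * z j) X := by
  rw [re_trace_mul_unitaryDiag, spectralSum, Finset.sum_comm]
  refine Finset.sum_congr rfl fun j _ => ?_
  have hfactor : (V : Matrix ι ι ℂ)ᴴ * (Xᴴ * unitaryDiag U a * X) * (V : Matrix ι ι ℂ) =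
      ((U : Matrix ι ι ℂ)ᴴ * X * (V : Matrix ι ι ℂ))ᴴ * (diagonal (fun i => (a i : ℂ)) *
        ((U : Matrix ι ι ℂ)ᴴ * X * (V : Matrix ι ι ℂ))) := by
    simp only [unitaryDiag_apply, conjTranspose_mul, conjTranspose_conjTranspose, mul_assoc]
  rw [hfactor, mul_apply, Complex.re_sum, Finset.sum_mul]
  refine Finset.sum_congr rfl fun i _ => ?_
  rw [conjTranspose_apply, diagonal_mul, Complex.star_def, mul_left_comm,
    ← Complex.normSq_eq_conj_mul_self, Complex.re_ofReal_mul, Complex.ofReal_re]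
  ring

theorem re_trace_conjTranspose_mul_unitaryDiag_mul (U V : unitaryGroup ι ℂ) (a : ι → ℝ)
    (X : Matrix ι ι ℂ) :
    (Xᴴ * unitaryDiag U a * X).trace.re = spectralSum U V (fun i _ => a i) X := by
  simpa only [map_one, mul_one, Pi.one_apply] using
    re_trace_conjTranspose_mul_unitaryDiag_mul_unitaryDiag U V a 1 X

theorem re_trace_conjTranspose_mul_self_mul_unitaryDiag (U V : unitaryGroup ι ℂ) (z : ι → ℝ)
    (X : Matrix ι ι ℂ) :
    (Xᴴ * X * unitaryDiag V z).trace.re = spectralSum U V (fun _ j => z j) X := by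
  simpa only [map_one, mul_one, one_mul, Pi.one_apply] using
    re_trace_conjTranspose_mul_unitaryDiag_mul_unitaryDiag U V 1 z X

variable {a z : ι → ℝ}

theorem spectralSum_parallelSum_le (U V : unitaryGroup ι ℂ) (ha : 0 ≤ a) (hz : 0 ≤ z)
    (X Y : Matrix ι ι ℂ) :
    spectralSum U V (fun i j => parallelSum (a i) (z j)) X ≤
      (Yᴴ * unitaryDiag U a * Y).trace.re + ((X - Y)ᴴ * (X - Y) * unitaryDiag V z).trace.re := by
  rw [re_trace_conjTranspose_mul_unitaryDiag_mul U V,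
    re_trace_conjTranspose_mul_self_mul_unitaryDiag U V]
  simp only [spectralSum, ← Finset.sum_add_distrib, mul_sub, sub_mul, Matrix.sub_apply]
  exact Finset.sum_le_sum fun i _ => Finset.sum_le_sum fun j _ =>
    parallelSum_mul_normSq_le (ha i) (hz j) _ _

theorem exists_spectralSum_parallelSum_eq (U V : unitaryGroup ι ℂ) (ha : 0 ≤ a) (hz : 0 ≤ z)
    (X : Matrix ι ι ℂ) :
    ∃ Y : Matrix ι ι ℂ,
      (Yᴴ * unitaryDiag U a * Y).trace.re + ((X - Y)ᴴ * (X - Y) * unitaryDiag V z).trace.re =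
        spectralSum U V (fun i j => parallelSum (a i) (z j)) X := by
  let T : Matrix ι ι ℂ := of fun i j =>
    ((z j / (a i + z j) : ℝ) : ℂ) * ((U : Matrix ι ι ℂ)ᴴ * X * V) i j
  have hT : (U : Matrix ι ι ℂ)ᴴ * (U * T * (V : Matrix ι ι ℂ)ᴴ) * V = T := by
    simp only [← star_eq_conjTranspose, mul_assoc, Unitary.coe_star_mul_self, mul_one]
    rw [← mul_assoc, Unitary.coe_star_mul_self, one_mul]
  refine ⟨U * T * (V : Matrix ι ι ℂ)ᴴ, ?_⟩
  rw [re_trace_conjTranspose_mul_unitaryDiag_mul U V,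
    re_trace_conjTranspose_mul_self_mul_unitaryDiag U V]
  simp only [spectralSum, ← Finset.sum_add_distrib, mul_sub, sub_mul, Matrix.sub_apply, hT]
  exact Finset.sum_congr rfl fun i _ => Finset.sum_congr rfl fun j _ =>
    parallelSum_mul_normSq_eq (ha i) (hz j) _

open MeasureTheory in
theorem exists_measure_spectralSum_rpow_mul_rpow_eq_integral {s : ℝ} (hs : s ∈ Set.Ioo 0 1) :
    ∃ μ : Measure ℝ, ∀ {k : ℕ} (U V : unitaryGroup (Fin k) ℂ) {a z : Fin k → ℝ}
      (X : Matrix (Fin k) (Fin k) ℂ), 0 ≤ a → 0 ≤ z →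
      IntegrableOn (fun t => t ^ (s - 1) *
        spectralSum U V (fun i j => parallelSum (t⁻¹ * a i) (z j)) X) (Set.Ioi 0) μ ∧
      spectralSum U V (fun i j => a i ^ s * z j ^ (1 - s)) X =
        ∫ t in Set.Ioi 0, t ^ (s - 1) *
          spectralSum U V (fun i j => parallelSum (t⁻¹ * a i) (z j)) X ∂μ := by
  obtain ⟨μ, hμ⟩ := exists_measure_rpow_mul_rpow_eq_integral_parallelSum hs
  refine ⟨μ, fun {k} U V a z X ha hz => ?_⟩
  have hint (i j) := ((hμ (a i) (z j) (ha i) (hz j)).1.mul_const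
    (Complex.normSq (((U : Matrix (Fin k) (Fin k) ℂ)ᴴ * X * (V : Matrix (Fin k) (Fin k) ℂ)) i j)))
  simp only [spectralSum, Finset.mul_sum, ← mul_assoc]
  refine ⟨integrable_finsetSum _ fun i _ => integrable_finsetSum _ fun j _ => hint i j, ?_⟩
  rw [integral_finsetSum _ fun i _ => integrable_finsetSum _ fun j _ => hint i j]
  refine Finset.sum_congr rfl fun i _ => ?_
  rw [integral_finsetSum _ fun j _ => hint i j]
  refine Finset.sum_congr rfl fun j _ => ?_
  rw [integral_mul_const, ← (hμ _ _ (ha i) (hz j)).2]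

end SpectralSum

section Lieb

variable {m n : ℕ} {Φ : Matrix (Fin m) (Fin m) ℂ →ₗ[ℂ] Matrix (Fin n) (Fin n) ℂ}
  {Ψ : Matrix (Fin n) (Fin n) ℂ →ₗ[ℂ] Matrix (Fin m) (Fin m) ℂ}

theorem IsSchwarz.spectralSum_parallelSum_le (hΦ : IsSchwarz Φ) (hadj : IsHSAdjoint Φ Ψ)
    {U V : unitaryGroup (Fin n) ℂ} {a z : Fin n → ℝ} {U' V' : unitaryGroup (Fin m) ℂ}
    {a' z' : Fin m → ℝ} (ha : 0 ≤ a) (hz : 0 ≤ z) (ha' : 0 ≤ a') (hz' : 0 ≤ z')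
    (hA : Ψ (unitaryDiag U a) = unitaryDiag U' a') (hZ : Ψ (unitaryDiag V z) = unitaryDiag V' z')
    (B : Matrix (Fin m) (Fin m) ℂ) :
    spectralSum U V (fun i j => parallelSum (a i) (z j)) (Φ B) ≤
      spectralSum U' V' (fun i j => parallelSum (a' i) (z' j)) B := by
  obtain ⟨K, hK⟩ := exists_spectralSum_parallelSum_eq U' V' ha' hz' B
  rw [← hK, ← hA, ← hZ]
  refine (_root_.spectralSum_parallelSum_le U V ha hz (Φ B) (Φ K)).trans (add_le_add ?_ ?_)
  · exact hΦ.re_trace_conjTranspose_mul_mul_le hadj (posSemidef_unitaryDiag_iff.mpr ha) K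
  · rw [← map_sub]
    exact hΦ.re_trace_conjTranspose_mul_self_mul_le hadj (posSemidef_unitaryDiag_iff.mpr hz) _

theorem IsSchwarz.re_trace_mpow_mul_mpow_le (hΦ : IsSchwarz Φ) (hadj : IsHSAdjoint Φ Ψ)
    {s : ℝ} (hs0 : 0 < s) (hs1 : s ≤ 1) {A Z : Matrix (Fin n) (Fin n) ℂ} (hA : A.PosSemidef)
    (hZ : Z.PosSemidef) (B : Matrix (Fin m) (Fin m) ℂ) :
    ((Φ B)ᴴ * mpow A s * Φ B * mpow Z (1 - s)).trace.re ≤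
      (Bᴴ * mpow (Ψ A) s * B * mpow (Ψ Z) (1 - s)).trace.re := by
  have hΨ := hadj.isPositiveMap hΦ.isPositiveMap
  rcases hs1.eq_or_lt with rfl | hs1
  · simpa only [sub_self, mpow_one hA, mpow_one (hΨ A hA), mpow_zero hZ, mpow_zero (hΨ Z hZ),
      mul_one] using hΦ.re_trace_conjTranspose_mul_mul_le hadj hA B
  obtain ⟨U, a, ha, hAU, hAs⟩ := exists_eq_unitaryDiag hA
  obtain ⟨V, z, hz, hZV, hZs⟩ := exists_eq_unitaryDiag hZ
  obtain ⟨U', a', ha', hAU', hAs'⟩ := exists_eq_unitaryDiag (hΨ A hA)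
  obtain ⟨V', z', hz', hZV', hZs'⟩ := exists_eq_unitaryDiag (hΨ Z hZ)
  obtain ⟨μ, hμ⟩ := exists_measure_spectralSum_rpow_mul_rpow_eq_integral ⟨hs0, hs1⟩
  rw [hAs, hZs, hAs', hZs', re_trace_conjTranspose_mul_unitaryDiag_mul_unitaryDiag,
    re_trace_conjTranspose_mul_unitaryDiag_mul_unitaryDiag, (hμ U V _ ha hz).2,
    (hμ U' V' _ ha' hz').2]
  refine MeasureTheory.setIntegral_mono_on (hμ U V _ ha hz).1 (hμ U' V' _ ha' hz').1
    measurableSet_Ioi fun t ht => ?_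
  have ht : 0 < t := ht
  have hscale : Ψ (unitaryDiag U (t⁻¹ • a)) = unitaryDiag U' (t⁻¹ • a') := by
    rw [map_smul (unitaryDiag U), map_smul (unitaryDiag U'), ← hAU, ← hAU']
    exact LinearMap.map_smul_of_tower Ψ _ _
  refine mul_le_mul_of_nonneg_left ?_ (Real.rpow_nonneg ht.le (s - 1))
  exact hΦ.spectralSum_parallelSum_le hadj (smul_nonneg (inv_nonneg.mpr ht.le) ha) hz
    (smul_nonneg (inv_nonneg.mpr ht.le) ha') hz' hscale (hZV ▸ hZV') B

end Lieb

section Jensen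

variable {m n : ℕ} {Ψ : Matrix (Fin n) (Fin n) ℂ →ₗ[ℂ] Matrix (Fin m) (Fin m) ℂ}
  {Z : Matrix (Fin n) (Fin n) ℂ} {c q : ℝ}

theorem rpow_sum_mul_le_rpow_sum_mul_sum_mul_rpow {ι : Type*} (t : Finset ι) {w f : ι → ℝ}
    (hq : 1 ≤ q) (hw : 0 ≤ w) (hf : 0 ≤ f) :
    (∑ i ∈ t, w i * f i) ^ q ≤ (∑ i ∈ t, w i) ^ (q - 1) * ∑ i ∈ t, w i * f i ^ q := by
  have hq0 : 0 < q := one_pos.trans_le hq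
  have hw' : 0 ≤ ∑ i ∈ t, w i := Finset.sum_nonneg fun i _ => hw i
  have hwf : 0 ≤ ∑ i ∈ t, w i * f i ^ q :=
    Finset.sum_nonneg fun i _ => mul_nonneg (hw i) (Real.rpow_nonneg (hf i) q)
  calc (∑ i ∈ t, w i * f i) ^ q
      ≤ ((∑ i ∈ t, w i) ^ (1 - q⁻¹) * (∑ i ∈ t, w i * f i ^ q) ^ q⁻¹) ^ q :=
        Real.rpow_le_rpow (Finset.sum_nonneg fun i _ => mul_nonneg (hw i) (hf i))
          (Real.inner_le_weight_mul_Lp_of_nonneg t hq w f hw hf) hq0.le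
    _ = (∑ i ∈ t, w i) ^ (q - 1) * ∑ i ∈ t, w i * f i ^ q := by
        rw [Real.mul_rpow (Real.rpow_nonneg hw' _) (Real.rpow_nonneg hwf _), ← Real.rpow_mul hw',
          Real.rpow_inv_rpow hwf hq0.ne', sub_mul, one_mul, inv_mul_cancel₀ hq0.ne']

theorem map_rpow_le_map_one_rpow_mul_map_mpow (φ : Matrix (Fin n) (Fin n) ℂ →ₗ[ℝ] ℝ)
    (hφ : ∀ X : Matrix (Fin n) (Fin n) ℂ, X.PosSemidef → 0 ≤ φ X) (hq : 1 ≤ q)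
    (hZ : Z.PosSemidef) : φ Z ^ q ≤ φ 1 ^ (q - 1) * φ (mpow Z q) := by
  obtain ⟨U, z, hz, hZU, hpow⟩ := exists_eq_unitaryDiag hZ
  let w : Fin n → ℝ := fun i => φ (unitaryDiag U (Pi.single i 1))
  have hw : 0 ≤ w := fun i =>
    hφ _ (posSemidef_unitaryDiag_iff.mpr (Pi.single_nonneg.mpr zero_le_one))
  have hφU (f : Fin n → ℝ) : φ (unitaryDiag U f) = ∑ i, w i * f i := by
    have hf : f = ∑ i, f i • Pi.single i (1 : ℝ) := by
      simp only [← Pi.single_smul, smul_eq_mul, mul_one, Finset.univ_sum_single]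
    conv_lhs => rw [hf]
    simp only [map_sum, map_smul, smul_eq_mul, w, mul_comm]
  have hφ1 : φ 1 = ∑ i, w i := by
    simpa only [map_one, Pi.one_apply, mul_one] using hφU 1
  rw [hpow, hφ1, hZU, hφU, hφU]
  exact rpow_sum_mul_le_rpow_sum_mul_sum_mul_rpow Finset.univ hq hw hz

theorem IsPositiveMap.sum_re_diag_rpow_le (hΨ : IsPositiveMap Ψ)
    (htr : ∀ X : Matrix (Fin n) (Fin n) ℂ, X.PosSemidef → (Ψ X).trace.re ≤ X.trace.re)
    (hc : 0 ≤ c) (hΨ1 : ((c : ℂ) • 1 - Ψ 1).PosSemidef) (hq : 1 ≤ q) (hZ : Z.PosSemidef)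
    (W : unitaryGroup (Fin m) ℂ) :
    ∑ j, (((W : Matrix (Fin m) (Fin m) ℂ)ᴴ * Ψ Z * W) j j).re ^ q ≤
      c ^ (q - 1) * (mpow Z q).trace.re := by
  let φ (j : Fin m) : Matrix (Fin n) (Fin n) ℂ →ₗ[ℝ] ℝ :=
    { toFun := fun X => (((W : Matrix (Fin m) (Fin m) ℂ)ᴴ * Ψ X * W) j j).re
      map_add' := fun X Y => by
        simp only [map_add, mul_add, add_mul, Matrix.add_apply, Complex.add_re]
      map_smul' := fun x X => by
        rw [LinearMap.map_smul_of_tower, mul_smul_comm, smul_mul_assoc, Matrix.smul_apply,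
          Complex.smul_re, RingHom.id_apply] }
  have hφ (j) (X : Matrix (Fin n) (Fin n) ℂ) (hX : X.PosSemidef) : 0 ≤ φ j X :=
    (Complex.nonneg_iff.mp ((hΨ X hX).conjTranspose_mul_mul_same _).diag_nonneg).1
  have hφ1 (j) : φ j 1 ≤ c := by
    have hW : (W : Matrix (Fin m) (Fin m) ℂ)ᴴ * W = 1 := Unitary.coe_star_mul_self W
    have hd := (hΨ1.conjTranspose_mul_mul_same (W : Matrix (Fin m) (Fin m) ℂ)).diag_nonneg (i := j)
    have hre := (Complex.nonneg_iff.mp hd).1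
    rwa [mul_sub, sub_mul, mul_smul_comm, smul_mul_assoc, mul_one, hW, Matrix.sub_apply,
      Matrix.smul_apply, one_apply_eq, smul_eq_mul, mul_one, Complex.sub_re, Complex.ofReal_re,
      sub_nonneg] at hre
  have hsum (X : Matrix (Fin n) (Fin n) ℂ) : ∑ j, φ j X = (Ψ X).trace.re := by
    have h := re_trace_mul_unitaryDiag (Ψ X) W 1
    simp only [map_one, mul_one, Pi.one_apply] at h
    exact h.symm
  calc ∑ j, φ j Z ^ q
      ≤ ∑ j, c ^ (q - 1) * φ j (mpow Z q) := Finset.sum_le_sum fun j _ =>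
        (map_rpow_le_map_one_rpow_mul_map_mpow (φ j) (hφ j) hq hZ).trans
          (mul_le_mul_of_nonneg_right
            (Real.rpow_le_rpow (hφ j 1 .one) (hφ1 j) (sub_nonneg.mpr hq))
            (hφ j _ (posSemidef_mpow hZ q)))
    _ = c ^ (q - 1) * (Ψ (mpow Z q)).trace.re := by rw [← Finset.mul_sum, hsum]
    _ ≤ c ^ (q - 1) * (mpow Z q).trace.re :=
        mul_le_mul_of_nonneg_left (htr _ (posSemidef_mpow hZ q)) (Real.rpow_nonneg hc _)

theorem IsPositiveMap.re_trace_mpow_map_le (hΨ : IsPositiveMap Ψ)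
    (htr : ∀ X : Matrix (Fin n) (Fin n) ℂ, X.PosSemidef → (Ψ X).trace.re ≤ X.trace.re)
    (hc : 0 ≤ c) (hΨ1 : ((c : ℂ) • 1 - Ψ 1).PosSemidef) (hq : 1 ≤ q) (hZ : Z.PosSemidef) :
    (mpow (Ψ Z) q).trace.re ≤ c ^ (q - 1) * (mpow Z q).trace.re := by
  obtain ⟨W, a, -, hW, hpow⟩ := exists_eq_unitaryDiag (hΨ Z hZ)
  have h := hΨ.sum_re_diag_rpow_le htr hc hΨ1 hq hZ W
  rw [hpow, re_trace_unitaryDiag]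
  simpa only [hW, conjTranspose_mul_unitaryDiag_mul, diagonal_apply_eq, Complex.ofReal_re] using h

end Jensen

section TraceInequalities

variable {k : ℕ} {Y W D : Matrix (Fin k) (Fin k) ℂ}

theorem sum_re_diag_rpow_le_re_trace_mpow (hY : Y.PosSemidef) (U : unitaryGroup (Fin k) ℂ) {p : ℝ}
    (hp : 1 ≤ p) :
    ∑ i, (((U : Matrix (Fin k) (Fin k) ℂ)ᴴ * Y * U) i i).re ^ p ≤ (mpow Y p).trace.re := by
  have hid : IsPositiveMap (LinearMap.id : Matrix (Fin k) (Fin k) ℂ →ₗ[ℂ] _) := fun _ hX => hX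
  have hone : (((1 : ℝ) : ℂ) • 1 - (1 : Matrix (Fin k) (Fin k) ℂ)).PosSemidef := by
    simpa only [Complex.ofReal_one, one_smul, sub_self] using PosSemidef.zero
  simpa only [LinearMap.id_apply, Real.one_rpow, one_mul] using
    hid.sum_re_diag_rpow_le (fun _ _ => le_rfl) zero_le_one hone hp hY U

theorem re_trace_mul_le_re_trace_mpow_mul_re_trace_mpow {p q : ℝ} (hpq : p.HolderConjugate q)
    (hY : Y.PosSemidef) (hW : W.PosSemidef) :
    (Y * W).trace.re ≤ (mpow Y p).trace.re ^ (1 / p) * (mpow W q).trace.re ^ (1 / q) := by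
  obtain ⟨U, w, hw, hWU, hpow⟩ := exists_eq_unitaryDiag hW
  let y : Fin k → ℝ := fun i => (((U : Matrix (Fin k) (Fin k) ℂ)ᴴ * Y * U) i i).re
  have hy (i) : 0 ≤ y i :=
    (Complex.nonneg_iff.mp (hY.conjTranspose_mul_mul_same _).diag_nonneg).1
  calc (Y * W).trace.re = ∑ i, y i * w i := by rw [hWU, re_trace_mul_unitaryDiag]
    _ ≤ (∑ i, y i ^ p) ^ (1 / p) * (∑ i, w i ^ q) ^ (1 / q) :=
        Real.inner_le_Lp_mul_Lq_of_nonneg _ hpq (fun i _ => hy i) fun i _ => hw i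
    _ ≤ (mpow Y p).trace.re ^ (1 / p) * (mpow W q).trace.re ^ (1 / q) := by
        rw [hpow q, re_trace_unitaryDiag]
        refine mul_le_mul_of_nonneg_right (Real.rpow_le_rpow ?_ ?_ ?_) ?_
        · exact Finset.sum_nonneg fun i _ => Real.rpow_nonneg (hy i) p
        · exact sum_re_diag_rpow_le_re_trace_mpow hY U hpq.lt.le
        · exact one_div_nonneg.mpr hpq.nonneg
        · exact Real.rpow_nonneg (Finset.sum_nonneg fun i _ => Real.rpow_nonneg (hw i) q) _

theorem re_trace_mul_mpow_le {c t : ℝ} (hY : Y.PosSemidef) (hD : D.PosSemidef)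
    (hDc : ((c : ℂ) • 1 - D).PosSemidef) (ht : 0 ≤ t) :
    (Y * mpow D t).trace.re ≤ c ^ t * Y.trace.re := by
  obtain ⟨U, d, hd, hDU, hpow⟩ := exists_eq_unitaryDiag hD
  have hsmul (x : ℝ) : (x : ℂ) • (1 : Matrix (Fin k) (Fin k) ℂ) = unitaryDiag U (x • 1) := by
    rw [map_smul, map_one, Complex.coe_smul]
  have hdc : 0 ≤ c • 1 - d := by
    rwa [hDU, hsmul, ← map_sub, posSemidef_unitaryDiag_iff] at hDc
  have hpowc : ((c ^ t : ℝ) • 1 - mpow D t).PosSemidef := by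
    rw [hpow, ← map_one (unitaryDiag U), ← map_smul, ← map_sub, posSemidef_unitaryDiag_iff]
    refine fun i => sub_nonneg.mpr ?_
    rw [Pi.smul_apply, Pi.one_apply, smul_eq_mul, mul_one]
    refine Real.rpow_le_rpow (hd i) ?_ ht
    simpa using hdc i
  have h := re_trace_mul_le_of_posSemidef_sub hY hpowc
  rwa [mul_smul_comm, mul_one, trace_smul, Complex.smul_re] at h

theorem le_rpow_mul_of_le_rpow_mul_rpow {p q S T d : ℝ} (hpq : p.HolderConjugate q) (hS : 0 ≤ S)
    (hT : 0 ≤ T) (hd : 0 ≤ d) (h : T ≤ S ^ (1 / p) * (d * T) ^ (1 / q)) :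
    T ≤ d ^ (p - 1) * S := by
  rcases hT.eq_or_lt with rfl | hT
  · exact mul_nonneg (Real.rpow_nonneg hd _) hS
  have hp : 1 / q * p = p - 1 := by
    rw [one_div, ← hpq.one_sub_inv, sub_mul, one_mul, inv_mul_cancel₀ hpq.ne_zero]
  have hpow : T * T ^ (p - 1) ≤ d ^ (p - 1) * S * T ^ (p - 1) := by
    calc T * T ^ (p - 1) = T ^ p := by rw [Real.rpow_sub_one hT.ne', mul_div_cancel₀ _ hT.ne']
      _ ≤ (S ^ (1 / p) * (d * T) ^ (1 / q)) ^ p := Real.rpow_le_rpow hT.le h hpq.nonneg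
      _ = S * (d * T) ^ (p - 1) := by
        rw [Real.mul_rpow (Real.rpow_nonneg hS _) (Real.rpow_nonneg (mul_nonneg hd hT.le) _),
          ← Real.rpow_mul hS, one_div_mul_cancel hpq.ne_zero, Real.rpow_one,
          ← Real.rpow_mul (mul_nonneg hd hT.le), hp]
      _ = d ^ (p - 1) * S * T ^ (p - 1) := by rw [Real.mul_rpow hd hT.le]; ring
  exact le_of_mul_le_mul_right hpow (Real.rpow_pos_of_pos hT _)

end TraceInequalities

section TraceMonotonicity

variable {m n : ℕ} {Φ : Matrix (Fin m) (Fin m) ℂ →ₗ[ℂ] Matrix (Fin n) (Fin n) ℂ}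
  {Ψ : Matrix (Fin n) (Fin n) ℂ →ₗ[ℂ] Matrix (Fin m) (Fin m) ℂ}
  {s r p q c : ℝ} {A : Matrix (Fin n) (Fin n) ℂ}

theorem IsSchwarz.re_trace_conjTranspose_mul_mpow_mul_le (hΦ : IsSchwarz Φ)
    (hadj : IsHSAdjoint Φ Ψ) (hs0 : 0 < s) (hs1 : s ≤ 1) (hΨ1 : ((c : ℂ) • 1 - Ψ 1).PosSemidef)
    (hA : A.PosSemidef) (B : Matrix (Fin m) (Fin m) ℂ) :
    ((Φ B)ᴴ * mpow A s * Φ B).trace.re ≤ c ^ (1 - s) * (Bᴴ * mpow (Ψ A) s * B).trace.re := by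
  have hΨ := hadj.isPositiveMap hΦ.isPositiveMap
  have h := hΦ.re_trace_mpow_mul_mpow_le hadj hs0 hs1 hA .one B
  rw [one_mpow, mul_one] at h
  have hY := (posSemidef_mpow (hΨ A hA) s).conjTranspose_mul_mul_same B
  exact h.trans (re_trace_mul_mpow_le hY (hΨ 1 .one) hΨ1 (sub_nonneg.mpr hs1))

theorem IsSchwarz.re_trace_mul_mpow_le_of_holderConjugate (hΦ : IsSchwarz Φ)
    (hadj : IsHSAdjoint Φ Ψ) (hs0 : 0 < s) (hs1 : s ≤ 1) (hc : 0 ≤ c)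
    (hΨ1 : ((c : ℂ) • 1 - Ψ 1).PosSemidef) (hpq : p.HolderConjugate q) (hsq : 1 ≤ (1 - s) * q)
    (hA : A.PosSemidef) (B : Matrix (Fin m) (Fin m) ℂ) {Z : Matrix (Fin n) (Fin n) ℂ}
    (hZ : Z.PosSemidef) :
    ((Φ B)ᴴ * mpow A s * Φ B * mpow Z (1 - s)).trace.re ≤
      (mpow (Bᴴ * mpow (Ψ A) s * B) p).trace.re ^ (1 / p) *
        (c ^ ((1 - s) * q - 1) * (mpow Z ((1 - s) * q)).trace.re) ^ (1 / q) := by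
  have hΨ := hadj.isPositiveMap hΦ.isPositiveMap
  have hY := (posSemidef_mpow (hΨ A hA) s).conjTranspose_mul_mul_same B
  have hjensen := hΨ.re_trace_mpow_map_le (fun X hX => hΦ.re_trace_map_le hadj hX) hc hΨ1 hsq hZ
  calc ((Φ B)ᴴ * mpow A s * Φ B * mpow Z (1 - s)).trace.re
      ≤ (Bᴴ * mpow (Ψ A) s * B * mpow (Ψ Z) (1 - s)).trace.re :=
        hΦ.re_trace_mpow_mul_mpow_le hadj hs0 hs1 hA hZ B
    _ ≤ (mpow (Bᴴ * mpow (Ψ A) s * B) p).trace.re ^ (1 / p) *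
          (mpow (Ψ Z) ((1 - s) * q)).trace.re ^ (1 / q) := by
        rw [← mpow_mpow (hΨ Z hZ)]
        exact re_trace_mul_le_re_trace_mpow_mul_re_trace_mpow hpq hY (posSemidef_mpow (hΨ Z hZ) _)
    _ ≤ _ := by
        have hq := hpq.symm.nonneg
        have hnonneg := re_trace_mpow_nonneg (hΨ Z hZ) ((1 - s) * q)
        have := re_trace_mpow_nonneg hY p
        gcongr

theorem IsSchwarz.re_trace_mpow_le_of_one_lt (hΦ : IsSchwarz Φ) (hadj : IsHSAdjoint Φ Ψ)
    (hs : 0 < s) (hp : 1 < p) (hsp : s * p ≤ 1) (hc : 0 ≤ c)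
    (hΨ1 : ((c : ℂ) • 1 - Ψ 1).PosSemidef) (hA : A.PosSemidef) (B : Matrix (Fin m) (Fin m) ℂ) :
    (mpow ((Φ B)ᴴ * mpow A s * Φ B) p).trace.re ≤
      c ^ (1 - s * p) * (mpow (Bᴴ * mpow (Ψ A) s * B) p).trace.re := by
  have hs1 : s < 1 := (lt_mul_of_one_lt_right hs hp).trans_le hsp
  have h1s : 0 < 1 - s := sub_pos.mpr hs1
  obtain ⟨q, hpq⟩ : ∃ q, p.HolderConjugate q := ⟨_, .conjExponent hp⟩
  have hq : (p - 1) * q = p := hpq.sub_one_mul_conj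
  have hexp : ((1 - s) * q - 1) * (p - 1) = 1 - s * p := by linear_combination (1 - s) * hq
  have hsq : 1 ≤ (1 - s) * q := by
    refine sub_nonneg.mp (nonneg_of_mul_nonneg_left ?_ (sub_pos.mpr hp))
    rw [hexp]
    exact sub_nonneg.mpr hsp
  set X := (Φ B)ᴴ * mpow A s * Φ B
  have hX : X.PosSemidef := (posSemidef_mpow hA s).conjTranspose_mul_mul_same (Φ B)
  have hΨA : (Ψ A).PosSemidef := hadj.isPositiveMap hΦ.isPositiveMap A hA
  have hY := (posSemidef_mpow hΨA s).conjTranspose_mul_mul_same B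
  have h := hΦ.re_trace_mul_mpow_le_of_holderConjugate hadj hs hs1.le hc hΨ1 hpq hsq hA B
    (posSemidef_mpow hX ((p - 1) / (1 - s)))
  rw [mpow_mpow hX, mpow_mpow hX, ← mul_assoc, div_mul_cancel₀ _ h1s.ne', hq,
    mul_mpow hX (by rw [add_sub_cancel]; exact hpq.ne_zero), add_sub_cancel] at h
  have hTS := le_rpow_mul_of_le_rpow_mul_rpow hpq (re_trace_mpow_nonneg hY p)
    (re_trace_mpow_nonneg hX p) (Real.rpow_nonneg hc _) h
  rwa [← Real.rpow_mul hc, hexp] at hTS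

theorem stmt11_general (hs0 : 0 < s) (hsr : s ≤ r) (hr1 : r ≤ 1) (hc : 0 ≤ c)
    (hΦ : IsSchwarz Φ) (hadj : IsHSAdjoint Φ Ψ) (hΨ1 : ((c : ℂ) • 1 - Ψ 1).PosSemidef)
    (hA : A.PosSemidef) (B : Matrix (Fin m) (Fin m) ℂ) :
    (mpow ((Φ B)ᴴ * mpow A s * Φ B) (r / s)).trace.re ≤
      c ^ (1 - r) * (mpow (Bᴴ * mpow (Ψ A) s * B) (r / s)).trace.re := by
  have hΨ := hadj.isPositiveMap hΦ.isPositiveMap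
  have hX := (posSemidef_mpow hA s).conjTranspose_mul_mul_same (Φ B)
  have hY := (posSemidef_mpow (hΨ A hA) s).conjTranspose_mul_mul_same B
  rcases hsr.eq_or_lt with rfl | hsr
  · rw [div_self hs0.ne', mpow_one hX, mpow_one hY]
    exact hΦ.re_trace_conjTranspose_mul_mpow_mul_le hadj hs0 hr1 hΨ1 hA B
  · have hr : s * (r / s) = r := mul_div_cancel₀ r hs0.ne'
    have h := hΦ.re_trace_mpow_le_of_one_lt hadj hs0 ((one_lt_div hs0).mpr hsr) (hr.trans_le hr1)
      hc hΨ1 hA B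
    rwa [hr] at h

end TraceMonotonicity

theorem stmt11 {m n : ℕ} (hm : 0 < m) (s r : ℝ) (hs0 : 0 < s) (hs1 : s ≤ 1)
    (hsr : s ≤ r) (hr1 : r ≤ 1)
    (Φ : Matrix (Fin m) (Fin m) ℂ →ₗ[ℂ] Matrix (Fin n) (Fin n) ℂ)
    (Ψ : Matrix (Fin n) (Fin n) ℂ →ₗ[ℂ] Matrix (Fin m) (Fin m) ℂ)
    (hΦ : IsSchwarz Φ) (hadj : IsHSAdjoint Φ Ψ)
    (hunital : Φ 1 = 1) (hsemi : Ψ 1 = (((n : ℝ) / m : ℝ) : ℂ) • 1)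
    (A : Matrix (Fin n) (Fin n) ℂ) (hA : A.PosSemidef)
    (B : Matrix (Fin m) (Fin m) ℂ) :
    (mpow ((Φ B)ᴴ * mpow A s * Φ B) (r / s)).trace.re ≤
      ((n : ℝ) / m) ^ (1 - r) * (mpow (Bᴴ * mpow (Ψ A) s * B) (r / s)).trace.re := by
  exact stmt11_general hs0 hsr hr1 (by positivity) hΦ hadj (by simp [hsemi, PosSemidef.zero]) hA B
end

section
/- For all B ∈ M_m(ℂ), 0 < s < 1 and 0 < r ≤ 1, the map A ↦ tr[(B* A^s B)^{r/s}] is concave on the positive semidefinite matrices M_m^+(ℂ). -/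
open Matrix
open scoped ComplexOrder

/-!
For `q = r / s ≤ 1` the operator concavity and monotonicity of `X ↦ X ^ q` suffice. For `q > 1`,
Young's trace inequality gives
`tr (X ^ q) = max_{Z ≥ 0} (q * tr (X * Z ^ (1 - 1 / q)) - (q - 1) * tr Z)`. With
`X = Bᴴ * A ^ s * B` the right-hand side is the partial maximum of a function of `(A, Z)` that is
jointly concave by Lieb's theorem, because `s + (1 - 1 / q) ≤ 1`; and a partial maximum of a jointly
concave function is concave.

Lieb's theorem is proved by writing `a ^ s * w ^ (1 - s)` as an integral of multiples of the
parallel sums `a * (t * w) / (a + t * w)`. For the commuting left and right multiplications by `A`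
and `W`, the quadratic form of the parallel sum is an infimum of functions linear in `(A, W)`,
hence concave.
-/

section EpsteinConcavity

open Set MeasureTheory

section Convexity

variable {E F G ι : Type*} [AddCommMonoid E] [Module ℝ E] [AddCommMonoid F] [Module ℝ F]

theorem concaveOn_comp_of_mapsTo [PartialOrder F] [AddCommMonoid G] [Module ℝ G] [PartialOrder G]
    {s : Set E} {t : Set F} {f : E → F} {g : F → G} (hg : ConcaveOn ℝ t g) (hgm : MonotoneOn g t)
    (hf : ConcaveOn ℝ s f) (hst : MapsTo f s t) : ConcaveOn ℝ s (g ∘ f) :=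
  ⟨hf.1, fun _ hx _ hy _ _ ha hb hab =>
    (hg.2 (hst hx) (hst hy) ha hb hab).trans <|
      hgm (hg.1 (hst hx) (hst hy) ha hb hab) (hst (hf.1 hx hy ha hb hab)) (hf.2 hx hy ha hb hab)⟩

theorem concaveOn_iInf [Nonempty ι] {s : Set E} {f : ι → E → ℝ} (hf : ∀ i, ConcaveOn ℝ s (f i))
    (hbdd : ∀ x ∈ s, BddBelow (range fun i => f i x)) : ConcaveOn ℝ s fun x => ⨅ i, f i x := by
  refine ⟨(hf (Classical.arbitrary ι)).1, fun x hx y hy a b ha hb hab => le_ciInf fun i => ?_⟩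
  refine le_trans ?_ ((hf i).2 hx hy ha hb hab)
  exact add_le_add (smul_le_smul_of_nonneg_left (ciInf_le (hbdd x hx) i) ha)
    (smul_le_smul_of_nonneg_left (ciInf_le (hbdd y hy) i) hb)

theorem concaveOn_of_isGreatest_image {s : Set E} {t : Set F} {g : E × F → ℝ} {f : E → ℝ}
    (hg : ConcaveOn ℝ (s ×ˢ t) g) (hf : ∀ x ∈ s, IsGreatest ((fun y => g (x, y)) '' t) (f x)) :
    ConcaveOn ℝ s f := by
  have hmaximizer {x : E} (hx : x ∈ s) : ∃ y, (x, y) ∈ s ×ˢ t ∧ g (x, y) = f x :=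
    let ⟨y, hy, hgy⟩ := (hf x hx).1
    ⟨y, ⟨hx, hy⟩, hgy⟩
  refine ⟨fun x hx x' hx' a b ha hb hab => ?_, fun x hx x' hx' a b ha hb hab => ?_⟩ <;>
    obtain ⟨y, hxy, hgy⟩ := hmaximizer hx <;>
    obtain ⟨y', hxy', hgy'⟩ := hmaximizer hx' <;>
    have hcomb := hg.1 hxy hxy' ha hb hab
  · exact hcomb.1
  · calc a • f x + b • f x' = a • g (x, y) + b • g (x', y') := by rw [hgy, hgy']
      _ ≤ g (a • (x, y) + b • (x', y')) := hg.2 hxy hxy' ha hb hab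
      _ ≤ f (a • x + b • x') := (hf _ hcomb.1).2 ⟨_, hcomb.2, rfl⟩

end Convexity

section Scalar

theorem isLeast_mul_norm_sq_add {E : Type*} [NormedAddCommGroup E] [NormedSpace ℝ E] {a b : ℝ}
    (ha : 0 ≤ a) (hb : 0 ≤ b) (k : E) :
    IsLeast (range fun x : E => a * ‖x‖ ^ 2 + b * ‖k - x‖ ^ 2) (a * b / (a + b) * ‖k‖ ^ 2) := by
  rcases (add_nonneg ha hb).eq_or_lt with hab | hab
  · obtain rfl : a = 0 := by linarith
    obtain rfl : b = 0 := by linarith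
    simp [IsLeast, lowerBounds]
  refine ⟨⟨(b / (a + b)) • k, ?_⟩, ?_⟩
  · have hsub : k - (b / (a + b)) • k = (a / (a + b)) • k := by
      rw [sub_eq_iff_eq_add, ← add_smul, ← add_div, div_self hab.ne', one_smul]
    simp only [hsub, norm_smul, mul_pow, Real.norm_eq_abs, sq_abs]
    field_simp
    ring
  · rintro _ ⟨x, rfl⟩
    have hk : ‖k‖ ≤ ‖x‖ + ‖k - x‖ := by simpa using norm_add_le x (k - x)
    calc a * b / (a + b) * ‖k‖ ^ 2 ≤ a * b / (a + b) * (‖x‖ + ‖k - x‖) ^ 2 := by gcongr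
      _ ≤ a * ‖x‖ ^ 2 + b * ‖k - x‖ ^ 2 := by
        rw [div_mul_eq_mul_div, div_le_iff₀ hab]
        linarith [sq_nonneg (a * ‖x‖ - b * ‖k - x‖)]

theorem exists_measure_rpow_mul_rpow_eq_integral {s : ℝ} (hs : s ∈ Ioo (0 : ℝ) 1) :
    ∃ μ : Measure ℝ, ∀ a w : ℝ, 0 ≤ a → 0 ≤ w →
      IntegrableOn (fun t => t ^ (s - 2) * (a * (t * w) / (a + t * w))) (Ioi 0) μ ∧
      a ^ s * w ^ (1 - s) = ∫ t in Ioi 0, t ^ (s - 2) * (a * (t * w) / (a + t * w)) ∂μ := by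
  obtain ⟨μ, hμ⟩ := Real.exists_measure_rpow_eq_integral_rpowIntegrand₀₁ hs
  refine ⟨μ, fun a w ha hw => ?_⟩
  have hs' : 1 - s ≠ 0 := by linarith [hs.2]
  rcases hw.eq_or_lt with rfl | hw'
  · simp [Real.zero_rpow hs']
  obtain ⟨hint, hpow⟩ := hμ (a / w) (div_nonneg ha hw)
  have hperspective : EqOn (fun t => w * Real.rpowIntegrand₀₁ s t (a / w))
      (fun t => t ^ (s - 2) * (a * (t * w) / (a + t * w))) (Ioi 0) := by
    intro t (ht : 0 < t)
    have hts : t ^ (s - 1) = t ^ (s - 2) * t := by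
      rw [← Real.rpow_add_one ht.ne']; ring_nf
    beta_reduce
    rw [Real.rpowIntegrand₀₁_eq_pow_div hs ht.le (div_nonneg ha hw), hts]
    field_simp
    ring
  refine ⟨IntegrableOn.congr_fun (hint.const_mul w) hperspective measurableSet_Ioi, ?_⟩
  calc a ^ s * w ^ (1 - s) = w * (a / w) ^ s := by
        rw [Real.div_rpow ha hw, Real.rpow_sub hw', Real.rpow_one]; ring
    _ = _ := by
        rw [hpow, ← integral_const_mul, setIntegral_congr_fun measurableSet_Ioi hperspective]

theorem mul_mul_rpow_le_rpow_add {q x z : ℝ} (hq : 1 < q) (hx : 0 ≤ x) (hz : 0 ≤ z) :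
    q * (x * z ^ (1 - q⁻¹)) ≤ x ^ q + (q - 1) * z := by
  have hq₀ : 0 < q := by linarith
  have hamgm := Real.geom_mean_le_arith_mean2_weighted (inv_nonneg.2 hq₀.le)
    (sub_nonneg.2 (inv_le_one_of_one_le₀ hq.le)) (Real.rpow_nonneg hx q) hz (by ring)
  rw [Real.rpow_rpow_inv hx hq₀.ne'] at hamgm
  calc q * (x * z ^ (1 - q⁻¹)) ≤ q * (q⁻¹ * x ^ q + (1 - q⁻¹) * z) := by gcongr
    _ = x ^ q + (q - 1) * z := by field_simp

end Scalar

section TraceInequalities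

open scoped MatrixOrder Matrix.Norms.L2Operator

variable {n k : Type*} [Fintype n]

section Conjugation

variable [Finite k]

theorem monotone_conjTranspose_mul_mul (K : Matrix n k ℂ) :
    Monotone fun A : Matrix n n ℂ => Kᴴ * A * K := fun A A' hAA' => by
  simpa [Matrix.le_iff, Matrix.mul_sub, Matrix.sub_mul] using
    (Matrix.le_iff.1 hAA').conjTranspose_mul_mul_same K

variable [DecidableEq n]

theorem conjTranspose_mul_rpow_mul_nonneg (K : Matrix n k ℂ) (A : Matrix n n ℂ) (s : ℝ) :
    0 ≤ Kᴴ * A ^ s * K :=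
  (CFC.rpow_nonneg.posSemidef.conjTranspose_mul_mul_same K).nonneg

theorem concaveOn_conjTranspose_mul_rpow_mul (B : Matrix n k ℂ) {s : ℝ} (hs : s ∈ Icc (0 : ℝ) 1) :
    ConcaveOn ℝ (Ici (0 : Matrix n n ℂ)) fun A => Bᴴ * A ^ s * B :=
  ⟨convex_Ici 0, fun A hA A' hA' a b ha hb hab => by
    simpa [Matrix.mul_add, Matrix.add_mul] using
      monotone_conjTranspose_mul_mul B ((CFC.concaveOn_rpow hs).2 hA hA' ha hb hab)⟩

end Conjugation

variable [Fintype k]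

section Trace

theorem concaveOn_re_trace {E : Type*} [AddCommMonoid E] [Module ℝ E] {s : Set E}
    {F : E → Matrix k k ℂ} (hF : ConcaveOn ℝ s F) : ConcaveOn ℝ s fun x => (F x).trace.re :=
  ⟨hF.1, fun x hx y hy a b ha hb hab => by
    have htrace := (Matrix.le_iff.1 (hF.2 hx hy ha hb hab)).trace_nonneg
    simpa using (Complex.nonneg_iff.1 htrace).1⟩

theorem re_trace_mul_nonneg {C D : Matrix k k ℂ} (hC : 0 ≤ C) (hD : 0 ≤ D) :
    0 ≤ (C * D).trace.re := by
  classical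
  obtain ⟨S, rfl⟩ := CStarAlgebra.nonneg_iff_eq_star_mul_self.1 hC
  rw [Matrix.mul_assoc, trace_mul_comm]
  exact (Complex.nonneg_iff.1 (hD.posSemidef.mul_mul_conjTranspose_same S).trace_nonneg).1

theorem re_trace_mul_le_re_trace_mul {C C' D D' : Matrix k k ℂ} (hC : 0 ≤ C) (hCC' : C ≤ C')
    (hD : 0 ≤ D) (hDD' : D ≤ D') : (C * D).trace.re ≤ (C' * D').trace.re := by
  have hleft := re_trace_mul_nonneg (sub_nonneg.2 hCC') hD
  have hright := re_trace_mul_nonneg (hC.trans hCC') (sub_nonneg.2 hDD')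
  rw [Matrix.sub_mul, trace_sub, Complex.sub_re, sub_nonneg] at hleft
  rw [Matrix.mul_sub, trace_sub, Complex.sub_re, sub_nonneg] at hright
  exact hleft.trans hright

end Trace

section ParallelForm

/-- The Anderson–Trapp variational form of the parallel sum of left multiplication by `A` and
right multiplication by `t • W`, as a quadratic form at `K`, where `P = (A, W)`. Joint concavity in
`P` is visible from this form. -/
noncomputable def parallelForm (K : Matrix n k ℂ) (t : ℝ) (P : Matrix n n ℂ × Matrix k k ℂ) : ℝ :=
  ⨅ X : Matrix n k ℂ, ((Xᴴ * P.1 * X).trace.re + t * ((K - X) * P.2 * (K - X)ᴴ).trace.re)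

theorem concaveOn_parallelForm (K : Matrix n k ℂ) {t : ℝ} (ht : 0 ≤ t) :
    ConcaveOn ℝ (Ici (0 : Matrix n n ℂ × Matrix k k ℂ)) (parallelForm K t) := by
  refine concaveOn_iInf (fun X => ⟨convex_Ici 0, fun P _ Q _ a b _ _ _ => ?_⟩)
    fun P hP => ⟨0, ?_⟩
  · simp only [Prod.fst_add, Prod.snd_add, Prod.smul_fst, Prod.smul_snd, Matrix.mul_add,
      Matrix.add_mul, Matrix.mul_smul, Matrix.smul_mul, trace_add, trace_smul, Complex.add_re,
      Complex.smul_re, smul_eq_mul]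
    exact le_of_eq (by ring)
  · rintro _ ⟨X, rfl⟩
    have hX := (hP.1.posSemidef.conjTranspose_mul_mul_same X).trace_nonneg
    have hKX := (hP.2.posSemidef.mul_mul_conjTranspose_same (K - X)).trace_nonneg
    exact add_nonneg (Complex.nonneg_iff.1 hX).1 (mul_nonneg ht (Complex.nonneg_iff.1 hKX).1)

end ParallelForm

variable [DecidableEq n] [DecidableEq k]

section Eigenbases

variable {A : Matrix n n ℂ} {W : Matrix k k ℂ}

/-- The matrix `U * K V` of `K` with respect to the eigenbases of `A` and `W`, as a linear
automorphism in `K`. It diagonalizes the quadratic forms `K ↦ tr (Kᴴ * f(A) * K * g(W))`. -/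
noncomputable def inEigenbases (hA : A.IsHermitian) (hW : W.IsHermitian) :
    Matrix n k ℂ ≃ₗ[ℂ] Matrix n k ℂ where
  toFun K := star (hA.eigenvectorUnitary : Matrix n n ℂ) * K *
    (hW.eigenvectorUnitary : Matrix k k ℂ)
  map_add' K L := by rw [Matrix.mul_add, Matrix.add_mul]
  map_smul' c K := by simp
  invFun K := (hA.eigenvectorUnitary : Matrix n n ℂ) * K *
    star (hW.eigenvectorUnitary : Matrix k k ℂ)
  left_inv K := by
    beta_reduce
    rw [← Matrix.mul_assoc, ← Matrix.mul_assoc, Unitary.mul_star_self_of_mem (SetLike.coe_mem _),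
      Matrix.one_mul, Matrix.mul_assoc, Unitary.mul_star_self_of_mem (SetLike.coe_mem _),
      Matrix.mul_one]
  right_inv K := by
    beta_reduce
    rw [← Matrix.mul_assoc, ← Matrix.mul_assoc, Unitary.star_mul_self_of_mem (SetLike.coe_mem _),
      Matrix.one_mul, Matrix.mul_assoc, Unitary.star_mul_self_of_mem (SetLike.coe_mem _),
      Matrix.mul_one]

theorem re_trace_conjTranspose_mul_diagonal_mul_diagonal (M : Matrix n k ℂ) (a : n → ℝ)
    (w : k → ℝ) :
    (Mᴴ * diagonal (fun i => (a i : ℂ)) * M * diagonal (fun j => (w j : ℂ))).trace.re =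
      ∑ i, ∑ j, a i * w j * ‖M i j‖ ^ 2 := by
  rw [Finset.sum_comm]
  simp only [trace, diag, mul_diagonal, Complex.re_sum]
  refine Finset.sum_congr rfl fun j _ => ?_
  rw [mul_apply, Finset.sum_mul, Complex.re_sum]
  refine Finset.sum_congr rfl fun i _ => ?_
  rw [mul_diagonal, conjTranspose_apply, ← Complex.normSq_eq_norm_sq]
  simp only [Complex.normSq_apply, RCLike.star_def, Complex.mul_re, Complex.mul_im,
    Complex.conj_re, Complex.conj_im, Complex.ofReal_re, Complex.ofReal_im]
  ring

theorem re_trace_conjTranspose_mul_cfc_mul_cfc (hA : A.IsHermitian) (hW : W.IsHermitian)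
    (K : Matrix n k ℂ) (f g : ℝ → ℝ) :
    (Kᴴ * cfc f A * K * cfc g W).trace.re =
      ∑ i, ∑ j, f (hA.eigenvalues i) * g (hW.eigenvalues j) * ‖inEigenbases hA hW K i j‖ ^ 2 := by
  rw [← re_trace_conjTranspose_mul_diagonal_mul_diagonal _ (fun i => f (hA.eigenvalues i))
    (fun j => g (hW.eigenvalues j)), hA.cfc_eq, hW.cfc_eq, IsHermitian.cfc, IsHermitian.cfc,
    Unitary.conjStarAlgAut_apply, Unitary.conjStarAlgAut_apply, ← Matrix.mul_assoc,
    trace_mul_comm]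
  simp only [inEigenbases, star_eq_conjTranspose, LinearEquiv.coe_mk, LinearMap.coe_mk,
    AddHom.coe_mk, conjTranspose_mul, conjTranspose_conjTranspose, Matrix.mul_assoc]
  rfl

theorem re_trace_conjTranspose_mul_mul (hA : A.IsHermitian) (hW : W.IsHermitian)
    (K : Matrix n k ℂ) :
    (Kᴴ * A * K).trace.re =
      ∑ i, ∑ j, hA.eigenvalues i * ‖inEigenbases hA hW K i j‖ ^ 2 := by
  simpa [cfc_id' ℝ A hA.isSelfAdjoint, cfc_const_one ℝ W hW.isSelfAdjoint] using
    re_trace_conjTranspose_mul_cfc_mul_cfc hA hW K (fun x => x) (fun _ => 1)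

theorem re_trace_mul_mul_conjTranspose (hA : A.IsHermitian) (hW : W.IsHermitian)
    (K : Matrix n k ℂ) :
    (K * W * Kᴴ).trace.re =
      ∑ i, ∑ j, hW.eigenvalues j * ‖inEigenbases hA hW K i j‖ ^ 2 := by
  rw [trace_mul_comm, ← Matrix.mul_assoc]
  simpa [cfc_id' ℝ W hW.isSelfAdjoint, cfc_const_one ℝ A hA.isSelfAdjoint] using
    re_trace_conjTranspose_mul_cfc_mul_cfc hA hW K (fun _ => 1) (fun x => x)

theorem re_trace_conjTranspose_mul_rpow_mul_rpow (hA : A.PosSemidef) (hW : W.PosSemidef)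
    (K : Matrix n k ℂ) (s p : ℝ) :
    (Kᴴ * A ^ s * K * W ^ p).trace.re =
      ∑ i, ∑ j, hA.1.eigenvalues i ^ s * hW.1.eigenvalues j ^ p *
        ‖inEigenbases hA.1 hW.1 K i j‖ ^ 2 := by
  rw [CFC.rpow_eq_cfc_real hA.nonneg, CFC.rpow_eq_cfc_real hW.nonneg,
    re_trace_conjTranspose_mul_cfc_mul_cfc]

end Eigenbases

section Lieb

theorem parallelForm_eq_sum {A : Matrix n n ℂ} {W : Matrix k k ℂ} (hA : A.PosSemidef)
    (hW : W.PosSemidef) (K : Matrix n k ℂ) {t : ℝ} (ht : 0 ≤ t) :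
    parallelForm K t (A, W) =
      ∑ i, ∑ j, hA.1.eigenvalues i * (t * hW.1.eigenvalues j) /
        (hA.1.eigenvalues i + t * hW.1.eigenvalues j) * ‖inEigenbases hA.1 hW.1 K i j‖ ^ 2 := by
  have henergy (X : Matrix n k ℂ) :
      (Xᴴ * A * X).trace.re + t * ((K - X) * W * (K - X)ᴴ).trace.re =
        ∑ i, ∑ j, (hA.1.eigenvalues i * ‖inEigenbases hA.1 hW.1 X i j‖ ^ 2 +
          t * hW.1.eigenvalues j *
            ‖inEigenbases hA.1 hW.1 K i j - inEigenbases hA.1 hW.1 X i j‖ ^ 2) := by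
    simp only [re_trace_conjTranspose_mul_mul hA.1 hW.1, re_trace_mul_mul_conjTranspose hA.1 hW.1,
      map_sub, Matrix.sub_apply, Finset.mul_sum, Finset.sum_add_distrib, mul_assoc]
  have hleast (i : n) (j : k) := isLeast_mul_norm_sq_add (hA.eigenvalues_nonneg i)
    (mul_nonneg ht (hW.eigenvalues_nonneg j)) (inEigenbases hA.1 hW.1 K i j)
  choose x hx using fun i j => (hleast i j).1
  refine IsLeast.csInf_eq ⟨⟨(inEigenbases hA.1 hW.1).symm (of x), ?_⟩, ?_⟩
  · simp only [henergy, LinearEquiv.apply_symm_apply, of_apply, hx]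
  · rintro _ ⟨X, rfl⟩
    simp only [henergy]
    exact Finset.sum_le_sum fun i _ => Finset.sum_le_sum fun j _ => (hleast i j).2 ⟨_, rfl⟩

theorem exists_measure_re_trace_rpow_mul_rpow_eq_integral {s : ℝ} (hs : s ∈ Ioo (0 : ℝ) 1) :
    ∃ μ : Measure ℝ, ∀ (K : Matrix n k ℂ) (P : Matrix n n ℂ × Matrix k k ℂ), 0 ≤ P →
      IntegrableOn (fun t => t ^ (s - 2) * parallelForm K t P) (Ioi 0) μ ∧
      (Kᴴ * P.1 ^ s * K * P.2 ^ (1 - s)).trace.re =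
        ∫ t in Ioi 0, t ^ (s - 2) * parallelForm K t P ∂μ := by
  obtain ⟨μ, hμ⟩ := exists_measure_rpow_mul_rpow_eq_integral hs
  refine ⟨μ, fun K P hP => ?_⟩
  have hA := hP.1.posSemidef
  have hW := hP.2.posSemidef
  have hterm (i : n) (j : k) := hμ _ _ (hA.eigenvalues_nonneg i) (hW.eigenvalues_nonneg j)
  have hint (i : n) (j : k) := (hterm i j).1.mul_const (‖inEigenbases hA.1 hW.1 K i j‖ ^ 2)
  have hsum : EqOn (fun t => ∑ i, ∑ j, t ^ (s - 2) *
        (hA.1.eigenvalues i * (t * hW.1.eigenvalues j) /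
          (hA.1.eigenvalues i + t * hW.1.eigenvalues j)) * ‖inEigenbases hA.1 hW.1 K i j‖ ^ 2)
      (fun t => t ^ (s - 2) * parallelForm K t P) (Ioi 0) := fun t (ht : 0 < t) => by
    simp only [parallelForm_eq_sum hA hW K ht.le, Finset.mul_sum, mul_assoc]
  refine ⟨IntegrableOn.congr_fun (integrable_finsetSum _ fun i _ =>
    integrable_finsetSum _ fun j _ => hint i j) hsum measurableSet_Ioi, ?_⟩
  rw [re_trace_conjTranspose_mul_rpow_mul_rpow hA hW,
    ← setIntegral_congr_fun measurableSet_Ioi hsum,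
    integral_finsetSum _ fun i _ => integrable_finsetSum _ fun j _ => hint i j]
  refine Finset.sum_congr rfl fun i _ => ?_
  rw [integral_finsetSum _ fun j _ => hint i j]
  exact Finset.sum_congr rfl fun j _ => by rw [integral_mul_const, (hterm i j).2]

theorem concaveOn_re_trace_rpow_mul_rpow_one_sub (K : Matrix n k ℂ) {s : ℝ}
    (hs : s ∈ Ioo (0 : ℝ) 1) :
    ConcaveOn ℝ (Ici (0 : Matrix n n ℂ × Matrix k k ℂ))
      fun P => (Kᴴ * P.1 ^ s * K * P.2 ^ (1 - s)).trace.re := by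
  obtain ⟨μ, hμ⟩ := exists_measure_re_trace_rpow_mul_rpow_eq_integral (n := n) (k := k) hs
  refine (integral_concaveOn_of_integrand_ae (convex_Ici 0) ?_ fun P hP => (hμ K P hP).1).congr
    fun P hP => (hμ K P hP).2.symm
  filter_upwards [ae_restrict_mem measurableSet_Ioi] with t ht
  exact (concaveOn_parallelForm K ht.le).smul (Real.rpow_nonneg ht.le _)

theorem monotone_re_trace_rpow_mul_rpow (K : Matrix n k ℂ) {s p : ℝ} (hs : s ∈ Icc (0 : ℝ) 1)
    (hp : p ∈ Icc (0 : ℝ) 1) :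
    Monotone fun P : Matrix n n ℂ × Matrix k k ℂ => (Kᴴ * P.1 ^ s * K * P.2 ^ p).trace.re :=
  fun _ _ hPQ => re_trace_mul_le_re_trace_mul (conjTranspose_mul_rpow_mul_nonneg K _ s)
    (monotone_conjTranspose_mul_mul K (CFC.monotone_rpow hs hPQ.1)) CFC.rpow_nonneg
    (CFC.monotone_rpow hp hPQ.2)

theorem concaveOn_re_trace_rpow_mul_rpow (K : Matrix n k ℂ) {s p : ℝ} (hs₀ : 0 < s) (hs₁ : s < 1)
    (hp : 0 ≤ p) (hsp : s + p ≤ 1) :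
    ConcaveOn ℝ (Ici (0 : Matrix n n ℂ × Matrix k k ℂ))
      fun P => (Kᴴ * P.1 ^ s * K * P.2 ^ p).trace.re := by
  have hs' : 0 < 1 - s := sub_pos.2 hs₁
  have hu : p / (1 - s) ∈ Icc (0 : ℝ) 1 :=
    ⟨div_nonneg hp hs'.le, (div_le_one hs').2 (by linarith)⟩
  have hpow : ConcaveOn ℝ (Ici (0 : Matrix n n ℂ × Matrix k k ℂ))
      fun P => (P.1, P.2 ^ (p / (1 - s))) :=
    ⟨convex_Ici 0, fun P hP Q hQ a b ha hb hab =>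
      ⟨le_rfl, (CFC.concaveOn_rpow hu).2 hP.2 hQ.2 ha hb hab⟩⟩
  refine (concaveOn_comp_of_mapsTo (concaveOn_re_trace_rpow_mul_rpow_one_sub K ⟨hs₀, hs₁⟩)
    ((monotone_re_trace_rpow_mul_rpow K ⟨hs₀.le, hs₁.le⟩ ⟨hs'.le, by linarith⟩).monotoneOn _)
    hpow fun P hP => ⟨hP.1, CFC.rpow_nonneg⟩).congr fun P hP => ?_
  simp only [Function.comp_apply,
    CFC.rpow_rpow_of_exponent_nonneg P.2 _ _ hu.1 hs'.le hP.2, div_mul_cancel₀ p hs'.ne']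

end Lieb

section TraceYoung

variable {X Z : Matrix k k ℂ} {q : ℝ}

theorem self_mul_rpow (hX : 0 ≤ X) {p : ℝ} (hp : 0 < p) : X * X ^ p = X ^ (1 + p) := by
  lift p to NNReal using hp.le
  rw [NNReal.coe_pos] at hp
  rw [← CFC.nnrpow_eq_rpow hp, ← NNReal.coe_one, ← NNReal.coe_add,
    ← CFC.nnrpow_eq_rpow (by positivity), CFC.nnrpow_add one_pos hp, CFC.nnrpow_one X hX]

theorem self_mul_rpow_rpow_one_sub_inv (hX : 0 ≤ X) (hq : 1 < q) :
    X * (X ^ q) ^ (1 - q⁻¹) = X ^ q := by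
  have hq₀ : 0 < q := zero_lt_one.trans hq
  have hexp : q * (1 - q⁻¹) = q - 1 := by field_simp
  rw [CFC.rpow_rpow_of_exponent_nonneg X _ _ hq₀.le
    (sub_nonneg.2 (inv_le_one_of_one_le₀ hq.le)) hX, hexp, self_mul_rpow hX (sub_pos.2 hq),
    add_sub_cancel]

theorem re_trace_mul_rpow_le (hX : 0 ≤ X) (hZ : 0 ≤ Z) (hq : 1 < q) :
    q * (X * Z ^ (1 - q⁻¹)).trace.re - (q - 1) * Z.trace.re ≤ (X ^ q).trace.re := by
  have heig := re_trace_conjTranspose_mul_rpow_mul_rpow hX.posSemidef hZ.posSemidef 1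
  have hXZ := heig 1 (1 - q⁻¹)
  have hXq := heig q 0
  have hZ₁ := heig 0 1
  simp only [conjTranspose_one, CFC.rpow_one X hX, CFC.rpow_one Z hZ, CFC.rpow_zero X hX,
    CFC.rpow_zero Z hZ, Real.rpow_zero, Real.rpow_one, one_mul, mul_one] at hXZ hXq hZ₁
  rw [hXZ, hXq, hZ₁, sub_le_iff_le_add]
  simp only [Finset.mul_sum, ← Finset.sum_add_distrib]
  refine Finset.sum_le_sum fun i _ => Finset.sum_le_sum fun j _ => ?_
  have hyoung := mul_mul_rpow_le_rpow_add hq (hX.posSemidef.eigenvalues_nonneg i)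
    (hZ.posSemidef.eigenvalues_nonneg j)
  simpa only [add_mul, mul_assoc] using mul_le_mul_of_nonneg_right hyoung (sq_nonneg _)

theorem isGreatest_image_re_trace_mul_rpow (hX : 0 ≤ X) (hq : 1 < q) :
    IsGreatest ((fun Z : Matrix k k ℂ =>
      q * (X * Z ^ (1 - q⁻¹)).trace.re - (q - 1) * Z.trace.re) '' Ici 0) (X ^ q).trace.re := by
  refine ⟨⟨X ^ q, mem_Ici.2 CFC.rpow_nonneg, ?_⟩, ?_⟩
  · simp only [self_mul_rpow_rpow_one_sub_inv hX hq]
    ring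
  · rintro _ ⟨Z, hZ, rfl⟩
    exact re_trace_mul_rpow_le hX hZ hq

end TraceYoung

section Epstein

theorem concaveOn_re_trace_rpow_of_le_one (B : Matrix n k ℂ) {s q : ℝ} (hs : s ∈ Icc (0 : ℝ) 1)
    (hq : q ∈ Icc (0 : ℝ) 1) :
    ConcaveOn ℝ (Ici (0 : Matrix n n ℂ)) fun A => ((Bᴴ * A ^ s * B) ^ q).trace.re :=
  concaveOn_re_trace <| concaveOn_comp_of_mapsTo (CFC.concaveOn_rpow hq)
    ((CFC.monotone_rpow hq).monotoneOn _) (concaveOn_conjTranspose_mul_rpow_mul B hs)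
    fun A _ => conjTranspose_mul_rpow_mul_nonneg B A s

theorem concaveOn_re_trace_rpow_of_one_lt (B : Matrix n k ℂ) {s q : ℝ} (hs : 0 < s) (hq : 1 < q)
    (hsq : s * q ≤ 1) :
    ConcaveOn ℝ (Ici (0 : Matrix n n ℂ)) fun A => ((Bᴴ * A ^ s * B) ^ q).trace.re := by
  have hq₀ : 0 < q := zero_lt_one.trans hq
  have hs_le : s ≤ q⁻¹ := by rwa [le_inv_comm₀ hs hq₀, ← one_div, le_div_iff₀' hs]
  have hq_inv : q⁻¹ < 1 := inv_lt_one_of_one_lt₀ hq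
  have hlieb := concaveOn_re_trace_rpow_mul_rpow B hs (hs_le.trans_lt hq_inv)
    (sub_nonneg.2 hq_inv.le) (by linarith)
  have hlinear : ConcaveOn ℝ (Ici (0 : Matrix n n ℂ × Matrix k k ℂ))
      fun P => -((q - 1) * P.2.trace.re) :=
    ⟨convex_Ici 0, fun P _ Q _ a b _ _ _ => le_of_eq (by
      simp only [Prod.snd_add, Prod.smul_snd, trace_add, trace_smul, Complex.add_re,
        Complex.smul_re, smul_eq_mul]
      ring)⟩
  have hjoint := (hlieb.smul hq₀.le).add hlinear
  rw [← Prod.mk_zero_zero, ← Ici_prod_Ici] at hjoint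
  refine concaveOn_of_isGreatest_image hjoint fun A _ => ?_
  simpa only [Pi.add_apply, smul_eq_mul, ← sub_eq_add_neg] using
    isGreatest_image_re_trace_mul_rpow (conjTranspose_mul_rpow_mul_nonneg B A s) hq

theorem stmt12_general (B : Matrix n k ℂ) {s r : ℝ} (hs₀ : 0 < s) (hs₁ : s ≤ 1) (hr₀ : 0 ≤ r)
    (hr₁ : r ≤ 1) :
    ConcaveOn ℝ (Ici (0 : Matrix n n ℂ)) fun A => ((Bᴴ * A ^ s * B) ^ (r / s)).trace.re := by
  rcases le_or_gt (r / s) 1 with hq | hq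
  · exact concaveOn_re_trace_rpow_of_le_one B ⟨hs₀.le, hs₁⟩ ⟨div_nonneg hr₀ hs₀.le, hq⟩
  · exact concaveOn_re_trace_rpow_of_one_lt B hs₀ hq (by rwa [mul_div_cancel₀ r hs₀.ne'])

end Epstein

theorem mpow_eq_rpow {m : ℕ} {A : Matrix (Fin m) (Fin m) ℂ} (hA : 0 ≤ A) (p : ℝ) :
    mpow A p = A ^ p := by
  rw [CFC.rpow_eq_cfc_real hA, hA.posSemidef.1.cfc_eq, IsHermitian.cfc,
    Unitary.conjStarAlgAut_apply, mpow, dif_pos hA.posSemidef.1]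
  rfl

theorem concaveOn_re_trace_mpow {m : ℕ} (B : Matrix (Fin m) (Fin m) ℂ) {s r : ℝ} (hs₀ : 0 < s)
    (hs₁ : s ≤ 1) (hr₀ : 0 ≤ r) (hr₁ : r ≤ 1) :
    ConcaveOn ℝ {A : Matrix (Fin m) (Fin m) ℂ | A.PosSemidef}
      fun A => (mpow (Bᴴ * mpow A s * B) (r / s)).trace.re := by
  simp only [← nonneg_iff_posSemidef]
  refine (stmt12_general B hs₀ hs₁ hr₀ hr₁).congr fun A hA => ?_
  simp only [mpow_eq_rpow (mem_Ici.1 hA), mpow_eq_rpow (conjTranspose_mul_rpow_mul_nonneg B A s)]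

end TraceInequalities

end EpsteinConcavity

theorem stmt12 {m : ℕ} (B : Matrix (Fin m) (Fin m) ℂ) (s r : ℝ)
    (hs0 : 0 < s) (hs1 : s < 1) (hr0 : 0 < r) (hr1 : r ≤ 1)
    (A₁ A₂ : Matrix (Fin m) (Fin m) ℂ) (hA₁ : A₁.PosSemidef) (hA₂ : A₂.PosSemidef)
    (c : ℝ) (hc0 : 0 ≤ c) (hc1 : c ≤ 1) :
    c * (mpow (Bᴴ * mpow A₁ s * B) (r / s)).trace.re +
        (1 - c) * (mpow (Bᴴ * mpow A₂ s * B) (r / s)).trace.re ≤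
      (mpow (Bᴴ * mpow ((c : ℂ) • A₁ + ((1 : ℂ) - (c : ℂ)) • A₂) s * B) (r / s)).trace.re := by
  rw [← Complex.ofReal_one, ← Complex.ofReal_sub, Complex.coe_smul, Complex.coe_smul]
  exact (concaveOn_re_trace_mpow B hs0 hs1.le hr0.le hr1).2 hA₁ hA₂ hc0 (sub_nonneg.2 hc1)
    (add_sub_cancel c 1)
end
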